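/- arXiv:1202.5572 — 2 statements merged into one kernel-verified Lean document; each statement's English description precedes it below -/
import Mathlib

section
/- The open toric cube C = f_A((0,1)^d), for A = {a_1,...,a_n} ⊂ ℕ^d, equals E(L((-∞,0)^d) ∩ W) for some linear subspace W, where L(z) = (a_1·z,...,a_n·z) and E is the component-wise exponential; in particular, C is the image under the component-wise exponential of a relatively open convex subset of ℝ^n, and hence C is path-connected. -/
/-- The monomial map `f_A`. -/
def monomialMap {d n : ℕ} (a : Fin n → Fin d → ℕ) (t : Fin d → ℝ) : Fin n → ℝ :=
  fun i => ∏ j, t j ^ a i j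

/-- The open unit cube `(0,1)^d`. -/
def openUnitCube (d : ℕ) : Set (Fin d → ℝ) := Set.pi Set.univ fun _ => Set.Ioo (0 : ℝ) 1

/-- The open negative orthant `(-∞,0)^d`. -/
def negOrthant (d : ℕ) : Set (Fin d → ℝ) := Set.pi Set.univ fun _ => Set.Iio (0 : ℝ)

/-- The linear map `L : ℝ^d → ℝ^n`, `z ↦ (a_1 · z, ..., a_n · z)`. -/
noncomputable def dotLinearMap {d n : ℕ} (a : Fin n → Fin d → ℕ) :
    (Fin d → ℝ) →ₗ[ℝ] (Fin n → ℝ) :=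
  LinearMap.pi fun i => ∑ j, (a i j : ℝ) • LinearMap.proj j

/-- The component-wise exponential. -/
noncomputable def cwExp {n : ℕ} (z : Fin n → ℝ) : Fin n → ℝ := fun i => Real.exp (z i)

/-!
Componentwise logarithms turn the monomial map `f_A` into the linear map `L` and the open cube into
the negative orthant, so `C = E(L((-∞,0)^d))`, and one can take `W = range L`. The orthant is open
and convex; `L` preserves convexity, and is open as a map onto its finite-dimensional range.
-/

theorem isOpen_preimage_val_image_of_finiteDimensional_range {𝕜 E F : Type*}
    [NontriviallyNormedField 𝕜] [CompleteSpace 𝕜]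
    [AddCommGroup E] [Module 𝕜 E] [TopologicalSpace E] [IsTopologicalAddGroup E]
    [ContinuousSMul 𝕜 E] [AddCommGroup F] [Module 𝕜 F] [TopologicalSpace F]
    [IsTopologicalAddGroup F] [ContinuousSMul 𝕜 F] [T2Space F]
    (f : E →ₗ[𝕜] F) [FiniteDimensional 𝕜 (LinearMap.range f)] {s : Set E} (hs : IsOpen s) :
    IsOpen (((↑) : LinearMap.range f → F) ⁻¹' (f '' s)) := by
  have hopen : IsOpenMap f.rangeRestrict :=
    f.rangeRestrict.isOpenMap_of_finiteDimensional f.surjective_rangeRestrict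
  have himage : f '' s = (↑) '' (f.rangeRestrict '' s) :=
    Set.image_comp Subtype.val f.rangeRestrict s
  rw [himage, Set.preimage_image_eq _ Subtype.val_injective]
  exact hopen s hs

theorem convex_negOrthant (d : ℕ) : Convex ℝ (negOrthant d) :=
  convex_pi fun _ _ => convex_Iio 0

theorem isOpen_negOrthant (d : ℕ) : IsOpen (negOrthant d) :=
  isOpen_set_pi Set.finite_univ fun _ _ => isOpen_Iio

theorem nonempty_negOrthant (d : ℕ) : (negOrthant d).Nonempty :=
  Set.univ_pi_nonempty_iff.mpr fun _ => Set.nonempty_Iio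

theorem continuous_cwExp {n : ℕ} : Continuous (cwExp : (Fin n → ℝ) → Fin n → ℝ) :=
  continuous_pi fun i => Real.continuous_exp.comp (continuous_apply i)

theorem cwExp_image_negOrthant (d : ℕ) : cwExp '' negOrthant d = openUnitCube d :=
  calc cwExp '' negOrthant d = Set.univ.pi fun _ => Real.exp '' Set.Iio 0 :=
        Set.piMap_image_univ_pi _ _
    _ = openUnitCube d := by simp only [Real.image_exp_Iio, Real.exp_zero, openUnitCube]

theorem monomialMap_cwExp {d n : ℕ} (a : Fin n → Fin d → ℕ) (z : Fin d → ℝ) :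
    monomialMap a (cwExp z) = cwExp (dotLinearMap a z) := by
  funext i
  simp [cwExp, dotLinearMap, monomialMap, Real.exp_sum, Real.exp_nat_mul]

theorem monomialMap_image_openUnitCube {d n : ℕ} (a : Fin n → Fin d → ℕ) :
    monomialMap a '' openUnitCube d = cwExp '' (dotLinearMap a '' negOrthant d) := by
  simp only [← cwExp_image_negOrthant, Set.image_image, monomialMap_cwExp]

/-- The open toric cube `C = f_A((0,1)^d)` equals `E(L((-∞,0)^d) ∩ W)` for some linear
subspace `W`; in particular `C` is the image under the component-wise exponential of a
relatively open convex subset of `ℝ^n`, and hence `C` is path-connected. -/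
theorem openToricCube_exp_of_convex {d n : ℕ} (a : Fin n → Fin d → ℕ) :
    (∃ W : Submodule ℝ (Fin n → ℝ),
      monomialMap a '' openUnitCube d =
        cwExp '' (dotLinearMap a '' negOrthant d ∩ (W : Set (Fin n → ℝ)))) ∧
    (∃ V : Set (Fin n → ℝ), Convex ℝ V ∧
      (∃ W : Submodule ℝ (Fin n → ℝ), V ⊆ (W : Set (Fin n → ℝ)) ∧
        IsOpen (((↑) : W → (Fin n → ℝ)) ⁻¹' V)) ∧
      monomialMap a '' openUnitCube d = cwExp '' V) ∧
    IsPathConnected (monomialMap a '' openUnitCube d) := by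
  have hcube := monomialMap_image_openUnitCube a
  have hconv : Convex ℝ (dotLinearMap a '' negOrthant d) :=
    (convex_negOrthant d).linear_image (dotLinearMap a)
  have hrange : dotLinearMap a '' negOrthant d ⊆ LinearMap.range (dotLinearMap a) :=
    Set.image_subset_range _ _
  have hopen := isOpen_preimage_val_image_of_finiteDimensional_range (dotLinearMap a)
    (isOpen_negOrthant d)
  refine ⟨⟨LinearMap.range (dotLinearMap a), ?_⟩, ⟨_, hconv, ⟨_, hrange, hopen⟩, hcube⟩, ?_⟩
  · rw [Set.inter_eq_left.mpr hrange, hcube]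
  · rw [hcube]
    exact (hconv.isPathConnected ((nonempty_negOrthant d).image _)).image continuous_cwExp
end

section
/- Let A = {a_1,...,a_n} ⊂ ℕ^d and suppose the vectors a_1,...,a_n span a k-dimensional subspace of ℝ^d... equivalently, let L(z) = (a_1·z,...,a_n·z) have rank k. Then the open toric cube C = f_A((0,1)^d) is a semi-algebraic set of dimension k. -/
open MeasureTheory

/-- Semialgebraic subsets of `ℝ^ι`: the Boolean algebra generated by sets of the form
`{x | p(x) > 0}` for real polynomials `p`. -/
inductive IsSemialgebraic {ι : Type} [Fintype ι] : Set (ι → ℝ) → Prop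
  | pos (p : MvPolynomial ι ℝ) : IsSemialgebraic {x | 0 < MvPolynomial.eval x p}
  | compl {s : Set (ι → ℝ)} : IsSemialgebraic s → IsSemialgebraic sᶜ
  | union {s t : Set (ι → ℝ)} :
      IsSemialgebraic s → IsSemialgebraic t → IsSemialgebraic (s ∪ t)

/-!
In logarithmic coordinates the monomial map is the linear map `L`, so `C` is the image under the
coordinatewise exponential of the cone `L((-∞, 0)^d)`, which is the sum of the open rays
`(-∞, 0) • v` spanned by the columns `v` of the exponent matrix. Fourier–Motzkin elimination, one
ray at a time, describes this cone by finitely many equations and strict inequalities between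
integer linear forms, and the exponential turns each of them into a comparison of two monomials.
The cone is open in the range of `L`, so its dimension is the rank of `L`; the coordinatewise
exponential and logarithm are both of class `C¹`, so they preserve Hausdorff dimension.
-/

section FourierMotzkin

variable {𝕜 : Type*} [Field 𝕜] [LinearOrder 𝕜] [IsStrictOrderedRing 𝕜]

theorem exists_neg_forall_sub_mul_neg_iff {α : Type*} (F : Finset α) (p q : α → 𝕜) :
    (∃ s < 0, ∀ c ∈ F, p c - s * q c < 0) ↔
      (∀ c ∈ F, 0 ≤ q c → p c < 0) ∧
        ∀ c ∈ F, ∀ c' ∈ F, 0 < q c → q c' < 0 → q c * p c' - q c' * p c < 0 := by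
  classical
  constructor
  · rintro ⟨s, hs, h⟩
    exact ⟨fun c hc hq ↦ by nlinarith [h c hc],
      fun c hc c' hc' hq hq' ↦ by nlinarith [h c hc, h c' hc']⟩
  · rintro ⟨hnonneg, hpair⟩
    -- `c` bounds `s` by `p c / q c`, from below if `0 < q c` and from above if `q c < 0`.
    obtain ⟨s, hlower, hupper⟩ := Order.exists_between_finsets
      ({c ∈ F | 0 < q c}.image fun c ↦ p c / q c)
      (insert 0 ({c ∈ F | q c < 0}.image fun c ↦ p c / q c)) (by
        simp only [Finset.forall_mem_image, Finset.forall_mem_insert, Finset.mem_filter]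
        rintro c ⟨hc, hq⟩
        refine ⟨div_neg_of_neg_of_pos (hnonneg c hc hq.le) hq, fun c' ⟨hc', hq'⟩ ↦ ?_⟩
        rw [div_lt_iff₀ hq, div_mul_eq_mul_div, lt_div_iff_of_neg hq']
        linarith [hpair c hc c' hc' hq hq'])
    simp only [Finset.forall_mem_image, Finset.forall_mem_insert, Finset.mem_filter, and_imp]
      at hlower hupper
    refine ⟨s, hupper.1, fun c hc ↦ ?_⟩
    rcases lt_trichotomy (q c) 0 with hq | hq | hq
    · linarith [(lt_div_iff_of_neg hq).1 (hupper.2 hc hq)]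
    · simpa [hq] using hnonneg c hc hq.ge
    · linarith [(div_lt_iff₀ hq).1 (hlower hc hq)]

end FourierMotzkin

section IntegerForm

variable {𝕜 ι : Type*} [CommRing 𝕜] [Fintype ι]

/-- The linear form `y ↦ ∑ i, b i * y i` with integer coefficient vector `b`. -/
def integerForm (b : ι → ℤ) : (ι → 𝕜) →ₗ[𝕜] 𝕜 :=
  dotProductBilin 𝕜 𝕜 fun i ↦ (b i : 𝕜)

theorem integerForm_apply (b : ι → ℤ) (y : ι → 𝕜) : integerForm b y = ∑ i, (b i : 𝕜) * y i :=
  rfl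

theorem integerForm_sub_smul_intCast (b v : ι → ℤ) (y : ι → 𝕜) (s : 𝕜) :
    integerForm b (y - s • fun i ↦ (v i : 𝕜)) = integerForm b y - s * (b ⬝ᵥ v : ℤ) := by
  rw [map_sub, map_smul, smul_eq_mul]
  simp [integerForm_apply, dotProduct]

theorem integerForm_sub (b c : ι → ℤ) (y : ι → 𝕜) :
    integerForm (b - c) y = integerForm b y - integerForm c y := by
  simp [integerForm_apply, sub_mul, Finset.sum_sub_distrib]

theorem integerForm_smul (m : ℤ) (b : ι → ℤ) (y : ι → 𝕜) :
    integerForm (m • b) y = m * integerForm b y := by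
  simp [integerForm_apply, Finset.mul_sum, mul_assoc]

theorem integerForm_single_one [DecidableEq ι] (i : ι) (y : ι → 𝕜) :
    integerForm (Pi.single i 1) y = y i := by
  simp [integerForm_apply, Pi.single_apply]

end IntegerForm

section Cone

open scoped Pointwise

section

variable {𝕜 ι : Type*} [CommRing 𝕜] [Preorder 𝕜]

/-- The open ray of negative multiples of an integer vector `v`, without its apex (so it is `{0}`
when `v = 0`). -/
def negRay (𝕜 : Type*) [CommRing 𝕜] [Preorder 𝕜] (v : ι → ℤ) : Set (ι → 𝕜) :=
  (fun s : 𝕜 ↦ s • fun i ↦ (v i : 𝕜)) '' Set.Iio 0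

theorem mem_add_negRay {S : Set (ι → 𝕜)} {v : ι → ℤ} {y : ι → 𝕜} :
    y ∈ S + negRay 𝕜 v ↔ ∃ s < (0 : 𝕜), y - s • (fun i ↦ (v i : 𝕜)) ∈ S := by
  constructor
  · rintro ⟨x, hx, _, ⟨s, hs, rfl⟩, rfl⟩
    exact ⟨s, hs, by simpa using hx⟩
  · rintro ⟨s, hs, hy⟩
    exact ⟨_, hy, _, ⟨s, hs, rfl⟩, sub_add_cancel _ _⟩

variable [Fintype ι]

/-- The set cut out by finitely many equations `b · y = 0` and strict inequalities `b · y < 0` with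
integer coefficient vectors `b`: a rational polyhedral cone that is open in its linear span, or the
empty set. -/
def IsRationalRelOpenCone (S : Set (ι → 𝕜)) : Prop :=
  ∃ E F : Finset (ι → ℤ),
    S = {y | (∀ b ∈ E, integerForm b y = 0) ∧ ∀ b ∈ F, integerForm b y < 0}

theorem IsRationalRelOpenCone.zero : IsRationalRelOpenCone (0 : Set (ι → 𝕜)) := by
  classical
  refine ⟨Finset.univ.image fun i ↦ Pi.single i 1, ∅, ?_⟩
  ext y
  simp only [Finset.forall_mem_image, integerForm_single_one, Set.mem_ofPred_eq]
  simp [funext_iff]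

end

namespace IsRationalRelOpenCone

variable {𝕜 ι : Type*} [Field 𝕜] [LinearOrder 𝕜] [IsStrictOrderedRing 𝕜] [Fintype ι]

theorem add_negRay_of_dotProduct_eq_zero {E F : Finset (ι → ℤ)} {v : ι → ℤ}
    (hE : ∀ b ∈ E, b ⬝ᵥ v = 0) :
    IsRationalRelOpenCone
      ({y : ι → 𝕜 | (∀ b ∈ E, integerForm b y = 0) ∧ ∀ b ∈ F, integerForm b y < 0} +
        negRay 𝕜 v) := by
  classical
  refine ⟨E, {b ∈ F | 0 ≤ b ⬝ᵥ v} ∪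
    {c ∈ F ×ˢ F | 0 < c.1 ⬝ᵥ v ∧ c.2 ⬝ᵥ v < 0}.image
      fun c ↦ (c.1 ⬝ᵥ v) • c.2 - (c.2 ⬝ᵥ v) • c.1, ?_⟩
  ext y
  have hEquations (s : 𝕜) : (∀ b ∈ E, integerForm b y - s * (b ⬝ᵥ v : ℤ) = 0) ↔
      ∀ b ∈ E, integerForm b y = 0 :=
    forall₂_congr fun b hb ↦ by rw [hE b hb, Int.cast_zero, mul_zero, sub_zero]
  have elimination := exists_neg_forall_sub_mul_neg_iff F (integerForm · y)
    fun b ↦ ((b ⬝ᵥ v : ℤ) : 𝕜)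
  simp only [mem_add_negRay, Set.mem_ofPred_eq, integerForm_sub_smul_intCast, hEquations,
    and_left_comm (b := ∀ b ∈ E, _), exists_and_left, elimination, Int.cast_nonneg_iff,
    Int.cast_pos, Int.cast_lt_zero]
  simp only [Finset.forall_mem_union, Finset.forall_mem_image, Finset.mem_filter,
    Finset.mem_product, Prod.forall, and_imp, integerForm_sub, integerForm_smul]
  grind

-- Since `g` vanishes on `S`, the coefficient of `v` is determined by `y` as `s = g(y) / g(v)`.
theorem add_negRay_of_dotProduct_pos {S : Set (ι → 𝕜)} (hS : IsRationalRelOpenCone S)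
    {g v : ι → ℤ} (hg : ∀ y ∈ S, integerForm g y = 0) (hgv : 0 < g ⬝ᵥ v) :
    IsRationalRelOpenCone (S + negRay 𝕜 v) := by
  classical
  obtain ⟨E, F, rfl⟩ := hS
  let eliminate (b : ι → ℤ) : ι → ℤ := (g ⬝ᵥ v) • b - (b ⬝ᵥ v) • g
  have hgv' : (0 : 𝕜) < (g ⬝ᵥ v : ℤ) := Int.cast_pos.2 hgv
  have hmul_neg (x : 𝕜) : (g ⬝ᵥ v : ℤ) * x < 0 ↔ x < 0 := smul_neg_iff_of_pos_left hgv'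
  have eliminate_apply {y : ι → 𝕜} {s : 𝕜} (hs : integerForm g y = (g ⬝ᵥ v : ℤ) * s)
      (b : ι → ℤ) : integerForm (eliminate b) y =
        (g ⬝ᵥ v : ℤ) * integerForm b (y - s • fun i ↦ (v i : 𝕜)) := by
    rw [integerForm_sub, integerForm_smul, integerForm_smul, integerForm_sub_smul_intCast, hs]
    ring
  have mem_iff {y : ι → 𝕜} {s : 𝕜} (hs : integerForm g y = (g ⬝ᵥ v : ℤ) * s) :
      ((∀ b ∈ E.image eliminate, integerForm b y = 0) ∧
        ∀ b ∈ insert g (F.image eliminate), integerForm b y < 0) ↔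
      s < 0 ∧ (∀ b ∈ E, integerForm b (y - s • fun i ↦ (v i : 𝕜)) = 0) ∧
        ∀ b ∈ F, integerForm b (y - s • fun i ↦ (v i : 𝕜)) < 0 := by
    simp only [Finset.forall_mem_insert, Finset.forall_mem_image, eliminate_apply hs, hs,
      mul_eq_zero, hgv'.ne', false_or, hmul_neg, and_left_comm]
  refine ⟨E.image eliminate, insert g (F.image eliminate), Set.ext fun y ↦ ?_⟩
  rw [mem_add_negRay]
  constructor
  · rintro ⟨s, hs, hy⟩
    have hgs := hg _ hy
    rw [integerForm_sub_smul_intCast, sub_eq_zero, mul_comm] at hgs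
    exact (mem_iff hgs).2 ⟨hs, hy⟩
  · intro hy
    exact ⟨integerForm g y / (g ⬝ᵥ v : ℤ), (mem_iff (mul_div_cancel₀ _ hgv'.ne').symm).1 hy⟩

theorem add_negRay {S : Set (ι → 𝕜)} (hS : IsRationalRelOpenCone S) (v : ι → ℤ) :
    IsRationalRelOpenCone (S + negRay 𝕜 v) := by
  obtain ⟨E, F, rfl⟩ := id hS
  by_cases hE : ∀ b ∈ E, b ⬝ᵥ v = 0
  · exact add_negRay_of_dotProduct_eq_zero hE
  · push Not at hE
    obtain ⟨b, hb, hbv⟩ := hE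
    refine hS.add_negRay_of_dotProduct_pos (g := (b ⬝ᵥ v) • b) (fun y hy ↦ ?_) ?_
    · rw [integerForm_smul, hy.1 b hb, mul_zero]
    · rw [smul_dotProduct, smul_eq_mul]
      exact mul_self_pos.2 hbv

theorem sum_negRay {κ : Type*} (J : Finset κ) (v : κ → ι → ℤ) :
    IsRationalRelOpenCone (∑ j ∈ J, negRay 𝕜 (v j)) := by
  induction J using Finset.cons_induction with
  | empty => exact zero
  | cons j J _ ih =>
    rw [Finset.sum_cons, add_comm]
    exact ih.add_negRay (v j)

end IsRationalRelOpenCone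

end Cone

namespace IsSemialgebraic

variable {ι : Type} [Fintype ι]

theorem univ : IsSemialgebraic (Set.univ : Set (ι → ℝ)) := by
  simpa using pos (1 : MvPolynomial ι ℝ)

theorem inter {s t : Set (ι → ℝ)} (hs : IsSemialgebraic s) (ht : IsSemialgebraic t) :
    IsSemialgebraic (s ∩ t) := by
  simpa [Set.compl_union] using (hs.compl.union ht.compl).compl

theorem forall_mem {α : Type*} (J : Finset α) {S : α → Set (ι → ℝ)}
    (hS : ∀ j ∈ J, IsSemialgebraic (S j)) : IsSemialgebraic {x | ∀ j ∈ J, x ∈ S j} := by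
  induction J using Finset.cons_induction with
  | empty => simpa using univ
  | cons j J _ ih =>
    simp only [Finset.forall_mem_cons] at hS ⊢
    exact hS.1.inter (ih hS.2)

theorem eval_lt_eval (p q : MvPolynomial ι ℝ) :
    IsSemialgebraic {x | MvPolynomial.eval x p < MvPolynomial.eval x q} := by
  simpa using pos (q - p)

theorem eval_eq_eval (p q : MvPolynomial ι ℝ) :
    IsSemialgebraic {x | MvPolynomial.eval x p = MvPolynomial.eval x q} := by
  convert (eval_lt_eval p q).compl.inter (eval_lt_eval q p).compl using 1
  ext x
  simp [le_antisymm_iff, and_comm]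

theorem forall_pos : IsSemialgebraic {x : ι → ℝ | ∀ i, 0 < x i} := by
  simpa using forall_mem Finset.univ fun i _ ↦ pos (MvPolynomial.X i : MvPolynomial ι ℝ)

end IsSemialgebraic

section CoordExp

variable {ι : Type*}

/-- The coordinatewise exponential `E : ℝ^ι → (0,∞)^ι`. -/
noncomputable def coordExp (y : ι → ℝ) : ι → ℝ := fun i ↦ Real.exp (y i)

theorem coordExp_log {x : ι → ℝ} (hx : ∀ i, 0 < x i) : coordExp (fun i ↦ Real.log (x i)) = x :=
  funext fun i ↦ Real.exp_log (hx i)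

theorem coordExp_image_pi_Iio_zero :
    coordExp '' Set.univ.pi (fun _ : ι ↦ Set.Iio 0) = Set.univ.pi fun _ ↦ Set.Ioo 0 1 := by
  rw [← Real.exp_zero, ← Real.image_exp_Iio]
  exact Set.piMap_image_univ_pi _ _

variable [Fintype ι]

theorem prod_coordExp_zpow (b : ι → ℤ) (y : ι → ℝ) :
    ∏ i, coordExp y i ^ b i = Real.exp (integerForm b y) := by
  simp [integerForm_apply, Real.exp_sum, coordExp, ← Real.rpow_intCast, ← Real.exp_mul, mul_comm]

theorem dimH_coordExp_image (S : Set (ι → ℝ)) : dimH (coordExp '' S) = dimH S := by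
  apply le_antisymm
  · have hexp : ContDiff ℝ 1 (coordExp : (ι → ℝ) → ι → ℝ) :=
      contDiff_pi.2 fun i ↦ (contDiff_apply ℝ ℝ i).exp
    exact hexp.contDiffOn.dimH_image_le convex_univ (Set.subset_univ S)
  · have hlog : ContDiffOn ℝ 1 (fun (x : ι → ℝ) i ↦ Real.log (x i))
        (Set.univ.pi fun _ ↦ Set.Ioi 0) :=
      contDiffOn_pi.2 fun i ↦ (contDiff_apply ℝ ℝ i).contDiffOn.log fun x hx ↦ (hx i trivial).ne'
    have himage : (fun (x : ι → ℝ) i ↦ Real.log (x i)) '' (coordExp '' S) = S := by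
      simp [Set.image_image, coordExp]
    calc dimH S = dimH ((fun (x : ι → ℝ) i ↦ Real.log (x i)) '' (coordExp '' S)) := by rw [himage]
      _ ≤ dimH (coordExp '' S) := hlog.dimH_image_le (convex_pi fun _ _ ↦ convex_Ioi 0) <| by
        rintro _ ⟨y, -, rfl⟩ i -
        exact Real.exp_pos _

end CoordExp

section Semialgebraic

variable {ι : Type} [Fintype ι]

/-- The monomial `∏ i, X i ^ max (b i) 0`. The Laurent monomial with exponent vector `b` is the
quotient of `numeratorMonomial b` by `numeratorMonomial (-b)`. -/
noncomputable def numeratorMonomial (b : ι → ℤ) : MvPolynomial ι ℝ :=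
  ∏ i, MvPolynomial.X i ^ (b i).toNat

theorem eval_coordExp_numeratorMonomial (b : ι → ℤ) (y : ι → ℝ) :
    (numeratorMonomial b).eval (coordExp y) =
      Real.exp (integerForm (fun i ↦ ((b i).toNat : ℤ)) y) := by
  simp only [numeratorMonomial, map_prod, map_pow, MvPolynomial.eval_X, ← prod_coordExp_zpow,
    zpow_natCast]

theorem integerForm_toNat_sub_toNat_neg (b : ι → ℤ) (y : ι → ℝ) :
    integerForm (fun i ↦ ((b i).toNat : ℤ)) y - integerForm (fun i ↦ (((-b) i).toNat : ℤ)) y =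
      integerForm b y := by
  rw [← integerForm_sub]
  exact congrArg (integerForm · y) (funext fun i ↦ (b i).toNat_sub_toNat_neg)

theorem eval_numeratorMonomial_lt_iff (b : ι → ℤ) (y : ι → ℝ) :
    (numeratorMonomial b).eval (coordExp y) < (numeratorMonomial (-b)).eval (coordExp y) ↔
      integerForm b y < 0 := by
  rw [eval_coordExp_numeratorMonomial, eval_coordExp_numeratorMonomial, Real.exp_lt_exp,
    ← sub_neg, integerForm_toNat_sub_toNat_neg]

theorem eval_numeratorMonomial_eq_iff (b : ι → ℤ) (y : ι → ℝ) :
    (numeratorMonomial b).eval (coordExp y) = (numeratorMonomial (-b)).eval (coordExp y) ↔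
      integerForm b y = 0 := by
  rw [eval_coordExp_numeratorMonomial, eval_coordExp_numeratorMonomial, Real.exp_eq_exp,
    ← sub_eq_zero, integerForm_toNat_sub_toNat_neg]

theorem IsRationalRelOpenCone.isSemialgebraic_coordExp_image {S : Set (ι → ℝ)}
    (hS : IsRationalRelOpenCone S) : IsSemialgebraic (coordExp '' S) := by
  obtain ⟨E, F, rfl⟩ := hS
  have hequations := IsSemialgebraic.forall_mem E fun b _ ↦
    .eval_eq_eval (numeratorMonomial b) (numeratorMonomial (-b))
  have hinequalities := IsSemialgebraic.forall_mem F fun b _ ↦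
    .eval_lt_eval (numeratorMonomial b) (numeratorMonomial (-b))
  convert IsSemialgebraic.forall_pos.inter (hequations.inter hinequalities) using 1
  ext x
  constructor
  · rintro ⟨y, ⟨hE, hF⟩, rfl⟩
    exact ⟨fun i ↦ Real.exp_pos _, fun b hb ↦ (eval_numeratorMonomial_eq_iff b y).2 (hE b hb),
      fun b hb ↦ (eval_numeratorMonomial_lt_iff b y).2 (hF b hb)⟩
  · rintro ⟨hx, hE, hF⟩
    rw [← coordExp_log hx] at hE hF ⊢
    exact ⟨_, ⟨fun b hb ↦ (eval_numeratorMonomial_eq_iff b _).1 (hE b hb),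
      fun b hb ↦ (eval_numeratorMonomial_lt_iff b _).1 (hF b hb)⟩, rfl⟩

end Semialgebraic

theorem dimH_image_of_nonempty_interior {V W : Type*}
    [NormedAddCommGroup V] [NormedSpace ℝ V] [FiniteDimensional ℝ V]
    [NormedAddCommGroup W] [NormedSpace ℝ W] (f : V →ₗ[ℝ] W) {U : Set V}
    (hU : (interior U).Nonempty) :
    dimH (f '' U) = Module.finrank ℝ (LinearMap.range f) := by
  have hopen : IsOpenMap f.rangeRestrict :=
    f.rangeRestrict.isOpenMap_of_finiteDimensional f.surjective_rangeRestrict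
  calc dimH (f '' U) = dimH ((↑) '' (f.rangeRestrict '' U) : Set W) := by
        rw [Set.image_image]; rfl
    _ = dimH (f.rangeRestrict '' U) := isometry_subtype_coe.dimH_image _
    _ = Module.finrank ℝ (LinearMap.range f) := Real.dimH_of_nonempty_interior <|
      (hU.image f.rangeRestrict).mono (hopen.image_interior_subset U)

section Toric

variable {ι κ : Type*} [Fintype κ]

/-- The Laurent monomial map `f_A`, where the `i`-th row of `a` is the exponent vector of the `i`-th
coordinate. -/
noncomputable def laurentMonomialMap (a : ι → κ → ℤ) (t : κ → ℝ) : ι → ℝ :=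
  fun i ↦ ∏ j, t j ^ a i j

/-- The linear map `L(z) = (a_1 · z, ..., a_n · z)`. -/
def exponentMap (a : ι → κ → ℤ) : (κ → ℝ) →ₗ[ℝ] (ι → ℝ) :=
  LinearMap.pi fun i ↦ integerForm (a i)

theorem monomialMap_eq_laurentMonomialMap {d n : ℕ} (a : Fin n → Fin d → ℕ) :
    monomialMap a = laurentMonomialMap fun i j ↦ (a i j : ℤ) := by
  ext
  simp [monomialMap, laurentMonomialMap]

theorem laurentMonomialMap_coordExp (a : ι → κ → ℤ) (z : κ → ℝ) :
    laurentMonomialMap a (coordExp z) = coordExp (exponentMap a z) :=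
  funext fun i ↦ prod_coordExp_zpow (a i) z

theorem laurentMonomialMap_image_pi_Ioo (a : ι → κ → ℤ) :
    laurentMonomialMap a '' Set.univ.pi (fun _ ↦ Set.Ioo 0 1) =
      coordExp '' (exponentMap a '' Set.univ.pi fun _ ↦ Set.Iio 0) := by
  simp only [← coordExp_image_pi_Iio_zero, Set.image_image, laurentMonomialMap_coordExp]

open scoped Pointwise in
theorem exponentMap_image_pi_Iio_zero (a : ι → κ → ℤ) :
    exponentMap a '' Set.univ.pi (fun _ ↦ Set.Iio 0) = ∑ j, negRay ℝ fun i ↦ a i j := by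
  have hsum (z : κ → ℝ) : exponentMap a z = ∑ j, z j • fun i ↦ (a i j : ℝ) := by
    ext i
    simp [exponentMap, integerForm_apply, mul_comm]
  simp only [negRay, ← Set.image_fintype_sum_pi, ← Set.piMap_image_univ_pi, Set.image_image,
    Pi.map_apply, hsum]

variable [Finite ι]

theorem finrank_range_exponentMap (a : ι → κ → ℤ) :
    Module.finrank ℝ (LinearMap.range (exponentMap a)) =
      Module.finrank ℝ (Submodule.span ℝ (Set.range fun i j ↦ (a i j : ℝ))) :=
  Matrix.rank_eq_finrank_span_row (Matrix.of fun i j ↦ (a i j : ℝ))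

end Toric

theorem openToricCube_semialgebraic_dim_general {ι : Type} {κ : Type*} [Fintype ι] [Fintype κ]
    (a : ι → κ → ℤ) :
    IsSemialgebraic (laurentMonomialMap a '' Set.univ.pi fun _ ↦ Set.Ioo 0 1) ∧
    dimH (laurentMonomialMap a '' Set.univ.pi fun _ ↦ Set.Ioo 0 1) =
      Module.finrank ℝ (Submodule.span ℝ (Set.range fun i j ↦ (a i j : ℝ))) := by
  have horthant : (interior (Set.univ.pi fun _ : κ ↦ Set.Iio (0 : ℝ))).Nonempty := by
    simp [interior_pi_set Set.finite_univ, Set.univ_pi_nonempty_iff]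
  rw [laurentMonomialMap_image_pi_Ioo]
  constructor
  · rw [exponentMap_image_pi_Iio_zero]
    exact (IsRationalRelOpenCone.sum_negRay _ _).isSemialgebraic_coordExp_image
  · rw [dimH_coordExp_image, dimH_image_of_nonempty_interior _ horthant,
      finrank_range_exponentMap]

/-- If the exponent vectors `a_1, ..., a_n` span a `k`-dimensional subspace of `ℝ^d`
(equivalently, the linear map `L` has rank `k`), then the open toric cube
`C = f_A((0,1)^d)` is a semialgebraic set of dimension `k`. -/
theorem openToricCube_semialgebraic_dim {d n k : ℕ} (a : Fin n → Fin d → ℕ)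
    (hspan : Module.finrank ℝ
      (Submodule.span ℝ (Set.range fun i => fun j => (a i j : ℝ))) = k) :
    IsSemialgebraic (monomialMap a '' openUnitCube d) ∧
    dimH (monomialMap a '' openUnitCube d) = k := by
  rw [monomialMap_eq_laurentMonomialMap, ← hspan]
  exact_mod_cast openToricCube_semialgebraic_dim_general fun i j ↦ (a i j : ℤ)
end
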